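/- (Monotonicity in z.) Let 0 < α < 1 and 0 < z ≤ z′. Then for all n×n positive semidefinite complex matrices ρ, σ: Q_{α,z}(ρ‖σ) ≥ Q_{α,z′}(ρ‖σ), i.e., Tr((σ^{(1−α)/(2z)} ρ^{α/z} σ^{(1−α)/(2z)})^z) ≥ Tr((σ^{(1−α)/(2z′)} ρ^{α/z′} σ^{(1−α)/(2z′)})^{z′}). -/

import Mathlib

open Matrix
open scoped ComplexOrder

/-- Real power of a positive semidefinite matrix via the spectral decomposition,
applying `x ^ t` (real `rpow`, so with the convention `0 ^ t = 0` for `t ≠ 0`)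
to the eigenvalues; returns `0` if the matrix is not Hermitian. -/
noncomputable def mpow {n : Type*} [Fintype n] [DecidableEq n]
    (A : Matrix n n ℂ) (t : ℝ) : Matrix n n ℂ :=
  if hA : A.IsHermitian then
    (hA.eigenvectorUnitary : Matrix n n ℂ) *
      Matrix.diagonal (fun i => ((hA.eigenvalues i ^ t : ℝ) : ℂ)) *
      star (hA.eigenvectorUnitary : Matrix n n ℂ)
  else 0


/-- The α-z-Rényi quantity `Q_{α,z}(ρ‖σ) = Tr((σ^((1−α)/2z) ρ^(α/z) σ^((1−α)/2z))^z)`. -/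
noncomputable def Qaz {n : Type*} [Fintype n] [DecidableEq n]
    (α z : ℝ) (ρ σ : Matrix n n ℂ) : ℝ :=
  ((mpow (mpow σ ((1 - α) / (2 * z)) * mpow ρ (α / z) * mpow σ ((1 - α) / (2 * z))) z).trace).re

/-!
Araki–Lieb–Thirring: `Tr (B ^ s * A ^ s * B ^ s) ^ q ≤ Tr (B * A * B) ^ (s * q)` for positive
semidefinite `A`, `B` and `0 < s ≤ 1`. The claim is the case `A = ρ ^ (α / z)`,
`B = σ ^ ((1 - α) / (2 * z))`, `s = z / z'`, `q = z'`.

For the largest eigenvalue this is the Cordes inequality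
`‖B ^ s * A ^ s * B ^ s‖ ≤ ‖B * A * B‖ ^ s`, a consequence of the operator monotonicity of
`x ↦ x ^ s`. Passing to `k`-th compound matrices, which is compatible with products and powers and
turns the norm into the product of the `k` largest eigenvalues, gives a weak log-majorization
between the two spectra, and weak log-majorization implies the inequality between sums of powers.
-/

section RpowNorm

open scoped NNReal Topology
open Filter

variable {A : Type*} [CStarAlgebra A] [PartialOrder A] [StarOrderedRing A]

lemma nnreal_smul_rpow {a : A} (ha : 0 ≤ a) (c : ℝ≥0) {y : ℝ} (hy : 0 ≤ y) :
    (c • a) ^ y = c ^ y • a ^ y := by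
  have hcont : Continuous fun x : ℝ≥0 ↦ x ^ y := NNReal.continuous_rpow_const hy
  rw [CFC.rpow_def, CFC.rpow_def, ← cfc_comp_smul c (· ^ y) a hcont.continuousOn,
    ← cfc_smul _ _ a hcont.continuousOn]
  simp only [smul_eq_mul, NNReal.mul_rpow]

lemma norm_rpow_mul_rpow_mul_rpow_le_of_isStrictlyPositive {a b : A} (ha : 0 ≤ a)
    (hb : IsStrictlyPositive b) {s : ℝ} (hs : s ∈ Set.Icc 0 1) :
    ‖b ^ s * a ^ s * b ^ s‖ ≤ ‖b * a * b‖ ^ s := by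
  have hbu : IsUnit b := hb.isUnit
  have hmul (x y : ℝ) : b ^ x * b ^ y = b ^ (x + y) := (CFC.rpow_add hbu).symm
  have hinv : b ^ (-1 : ℝ) * b = 1 := by
    simpa only [CFC.rpow_one b hb.nonneg] using CFC.rpow_neg_mul_rpow 1 hb
  have hinv' : b * b ^ (-1 : ℝ) = 1 := by
    simpa only [CFC.rpow_one b hb.nonneg] using CFC.rpow_mul_rpow_neg 1 hb
  set c : ℝ≥0 := ‖b * a * b‖₊
  have hba : b * a * b ≤ algebraMap ℝ≥0 A c :=
    (IsSelfAdjoint.of_nonneg (conjugate_nonneg_of_nonneg ha hb.nonneg)).le_algebraMap_norm_self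
  have hab : a ≤ c • b ^ (-2 : ℝ) := by
    calc a = b ^ (-1 : ℝ) * (b * a * b) * b ^ (-1 : ℝ) := by
          rw [show b ^ (-1 : ℝ) * (b * a * b) * b ^ (-1 : ℝ) =
            b ^ (-1 : ℝ) * b * a * (b * b ^ (-1 : ℝ)) by simp only [mul_assoc], hinv, hinv',
            one_mul, mul_one]
      _ ≤ b ^ (-1 : ℝ) * algebraMap ℝ≥0 A c * b ^ (-1 : ℝ) :=
          conjugate_le_conjugate_of_nonneg hba CFC.rpow_nonneg
      _ = c • b ^ (-2 : ℝ) := by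
          rw [← Algebra.commutes, mul_assoc, hmul, ← Algebra.smul_def]; norm_num
  have hab_rpow : a ^ s ≤ c ^ s • b ^ (-2 * s) := by
    rw [← CFC.rpow_rpow b _ _ (by norm_num) hb, ← nnreal_smul_rpow CFC.rpow_nonneg _ hs.1]
    exact CFC.rpow_le_rpow hs hab
  have hle : b ^ s * a ^ s * b ^ s ≤ algebraMap ℝ≥0 A (c ^ s) := by
    calc b ^ s * a ^ s * b ^ s ≤ b ^ s * (c ^ s • b ^ (-2 * s)) * b ^ s :=
          conjugate_le_conjugate_of_nonneg hab_rpow CFC.rpow_nonneg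
      _ = c ^ s • b ^ (0 : ℝ) := by
          rw [mul_smul_comm, smul_mul_assoc, hmul, hmul]; ring_nf
      _ = algebraMap ℝ≥0 A (c ^ s) := by
          rw [CFC.rpow_zero b hb.nonneg, Algebra.algebraMap_eq_smul_one]
  exact (CStarAlgebra.norm_le_iff_le_algebraMap _ (by positivity)
    (conjugate_nonneg_of_nonneg CFC.rpow_nonneg CFC.rpow_nonneg)).2 hle

lemma tendsto_add_algebraMap_nhdsGT_zero {b : A} (hb : 0 ≤ b) :
    Tendsto (fun δ : ℝ ↦ b + algebraMap ℝ A δ) (𝓝[>] 0) (𝓝[{x | 0 ≤ x}] b) := by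
  have hcont : Continuous fun δ : ℝ ↦ b + algebraMap ℝ A δ := by fun_prop
  refine tendsto_nhdsWithin_iff.2 ⟨?_, ?_⟩
  · simpa only [map_zero, add_zero] using (hcont.tendsto 0).mono_left nhdsWithin_le_nhds
  · filter_upwards [self_mem_nhdsWithin] with δ hδ
    exact add_nonneg hb (algebraMap_nonneg A (le_of_lt hδ))

lemma continuousOn_rpow_of_pos {s : ℝ} (hs : 0 < s) :
    ContinuousOn (fun x : A ↦ x ^ s) {x | 0 ≤ x} := by
  lift s to ℝ≥0 using hs.le
  simpa only [CFC.nnrpow_eq_rpow (NNReal.coe_pos.1 hs)] using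
    CFC.continuousOn_nnrpow (A := A) s

theorem norm_rpow_mul_rpow_mul_rpow_le {a b : A} (ha : 0 ≤ a) (hb : 0 ≤ b) {s : ℝ}
    (hs : s ∈ Set.Ioc 0 1) : ‖b ^ s * a ^ s * b ^ s‖ ≤ ‖b * a * b‖ ^ s := by
  have hshift := tendsto_add_algebraMap_nhdsGT_zero hb
  have hb₁ := hshift.mono_right nhdsWithin_le_nhds
  have hbs := (continuousOn_rpow_of_pos hs.1 b hb).tendsto.comp hshift
  refine le_of_tendsto_of_tendsto ((hbs.mul_const (a ^ s)).mul hbs).norm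
    (((hb₁.mul_const a).mul hb₁).norm.rpow_const (Or.inr hs.1.le)) ?_
  filter_upwards [self_mem_nhdsWithin] with δ hδ
  exact norm_rpow_mul_rpow_mul_rpow_le_of_isStrictlyPositive ha
    ((isStrictlyPositive_algebraMap hδ).nonneg_add hb) ⟨hs.1.le, hs.2⟩

end RpowNorm

section ConjDiagonal

open Polynomial

lemma cfc_starAlgHom_pi {ι A : Type*} [Finite ι] [TopologicalSpace A] [Ring A] [StarRing A]
    [Algebra ℝ A] [ContinuousFunctionalCalculus ℝ A IsSelfAdjoint]
    (φ : (ι → ℝ) →⋆ₐ[ℝ] A) (f : ℝ → ℝ) (d : ι → ℝ) : cfc f (φ d) = φ (f ∘ d) := by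
  classical
  have := Fintype.ofFinite ι
  -- On the finite spectrum `f` agrees with a polynomial, and polynomials commute with `φ`.
  let p : ℝ[X] := Lagrange.interpolate (Finset.univ.image d) id f
  have hp (i : ι) : p.eval (d i) = f (d i) :=
    Lagrange.eval_interpolate_at_node f Function.injective_id.injOn
      (Finset.mem_image_of_mem d (Finset.mem_univ i))
  have hspec : spectrum ℝ (φ d) ⊆ Set.range d := by
    refine (AlgHom.spectrum_apply_subset φ d).trans ((Pi.spectrum_eq (R := ℝ) d).subset.trans ?_)
    exact Set.iUnion_subset fun i ↦
      (spectrum.scalar_eq (d i)).subset.trans (Set.singleton_subset_iff.2 ⟨i, rfl⟩)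
  calc cfc f (φ d) = cfc p.eval (φ d) := by
        refine cfc_congr fun x hx ↦ ?_
        obtain ⟨i, rfl⟩ := hspec hx
        exact (hp i).symm
    _ = φ (aeval d p) := by
        rw [cfc_polynomial p (φ d) ((IsSelfAdjoint.all d).map φ), aeval_algHom_apply]
    _ = φ (f ∘ d) := by
        congr 1
        ext i
        simp only [aeval_pi_apply, coe_aeval_eq_eval, hp, Function.comp_apply]

open scoped MatrixOrder Matrix.Norms.L2Operator

variable {n : Type*} [Fintype n] [DecidableEq n]

/-- The Hermitian matrix `U diag(d) U⋆` with eigenvalues `d` and eigenvectors the columns of `U`,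
as a star algebra homomorphism in `d`. -/
noncomputable def conjDiagonal (U : unitary (Matrix n n ℂ)) : (n → ℝ) →⋆ₐ[ℝ] Matrix n n ℂ :=
  ((Unitary.conjStarAlgAut ℂ _ U : Matrix n n ℂ →⋆ₐ[ℂ] Matrix n n ℂ).restrictScalars ℝ).comp
    { (diagonalAlgHom ℝ).comp (Complex.ofRealAm.compLeft n) with
      map_star' := fun d ↦ by
        change diagonal (fun i ↦ (d i : ℂ)) = (diagonal fun i ↦ (d i : ℂ))ᴴ
        rw [diagonal_conjTranspose]
        congr 1
        ext i
        exact (Complex.conj_ofReal (d i)).symm }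

lemma conjDiagonal_apply (U : unitary (Matrix n n ℂ)) (d : n → ℝ) :
    conjDiagonal U d = U * diagonal (fun i ↦ (d i : ℂ)) * star (U : Matrix n n ℂ) := rfl

lemma eq_conjDiagonal_eigenvalues {A : Matrix n n ℂ} (hA : A.IsHermitian) :
    A = conjDiagonal hA.eigenvectorUnitary hA.eigenvalues :=
  hA.spectral_theorem

variable (U : unitary (Matrix n n ℂ))

lemma conjDiagonal_nonneg {d : n → ℝ} (hd : 0 ≤ d) : 0 ≤ conjDiagonal U d := map_nonneg _ hd

lemma rpow_conjDiagonal {d : n → ℝ} (hd : 0 ≤ d) (t : ℝ) :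
    conjDiagonal U d ^ t = conjDiagonal U (fun i ↦ d i ^ t) := by
  rw [CFC.rpow_eq_cfc_real (conjDiagonal_nonneg U hd), cfc_starAlgHom_pi]
  rfl

lemma trace_conjDiagonal (d : n → ℝ) : (conjDiagonal U d).trace = ∑ i, (d i : ℂ) := by
  rw [conjDiagonal_apply, trace_mul_comm, ← mul_assoc, Unitary.coe_star_mul_self, one_mul,
    trace_diagonal]

lemma norm_conjDiagonal (d : n → ℝ) : ‖conjDiagonal U d‖ = ‖d‖ := by
  rw [conjDiagonal_apply, ← Unitary.coe_star, CStarRing.norm_mul_coe_unitary,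
    CStarRing.norm_coe_unitary_mul, l2_opNorm_diagonal]
  simp [Pi.norm_def]

lemma exists_eq_conjDiagonal {A : Matrix n n ℂ} (hA : 0 ≤ A) :
    ∃ (U : unitary (Matrix n n ℂ)) (d : n → ℝ), 0 ≤ d ∧ A = conjDiagonal U d :=
  have hA' := nonneg_iff_posSemidef.1 hA
  ⟨_, _, hA'.eigenvalues_nonneg, eq_conjDiagonal_eigenvalues hA'.isHermitian⟩

lemma mpow_eq_rpow {A : Matrix n n ℂ} (hA : 0 ≤ A) (t : ℝ) : mpow A t = A ^ t := by
  have hA' := nonneg_iff_posSemidef.1 hA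
  conv_rhs => rw [eq_conjDiagonal_eigenvalues hA'.isHermitian,
    rpow_conjDiagonal _ hA'.eigenvalues_nonneg]
  exact dif_pos hA'.isHermitian

lemma rpow_rpow_of_nonneg {A : Matrix n n ℂ} (hA : 0 ≤ A) (s t : ℝ) :
    (A ^ s) ^ t = A ^ (s * t) := by
  obtain ⟨U, d, hd, rfl⟩ := exists_eq_conjDiagonal hA
  rw [rpow_conjDiagonal U hd, rpow_conjDiagonal U fun i ↦ Real.rpow_nonneg (hd i) s,
    rpow_conjDiagonal U hd]
  simp only [Real.rpow_mul (hd _)]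

end ConjDiagonal

section Compound

variable {l m n R : Type*} [LinearOrder l] [LinearOrder m] [LinearOrder n] [CommRing R]

/-- The `k`-th compound matrix: its entries are the `k × k` minors of `M`, rows and columns being
indexed by the `k`-element subsets. It is the matrix of the exterior power `⋀ᵏ M`. -/
def compound (k : ℕ) (M : Matrix m n R) :
    Matrix (Set.powersetCard m k) (Set.powersetCard n k) R :=
  of fun s t ↦ (M.submatrix (Set.powersetCard.ofFinEmbEquiv.symm s)
    (Set.powersetCard.ofFinEmbEquiv.symm t)).det

variable (k : ℕ)

lemma compound_conjTranspose [StarRing R] (M : Matrix m n R) :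
    compound k Mᴴ = (compound k M)ᴴ := by
  ext s t
  exact det_conjTranspose _

lemma compound_eq_toMatrix [Finite m] [Fintype n] (M : Matrix m n R) :
    compound k M = LinearMap.toMatrix ((Pi.basisFun R n).exteriorPower k)
      ((Pi.basisFun R m).exteriorPower k) (exteriorPower.map k (toLin' M)) := by
  ext s t
  rw [LinearMap.toMatrix_apply, exteriorPower.basis_repr_apply, exteriorPower.basis_apply,
    exteriorPower.map_apply_ιMulti_family, exteriorPower.ιMulti_family,
    exteriorPower.ιMultiDual_apply_ιMulti, compound, of_apply, ← det_transpose]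
  congr 1
  ext i j
  simp

lemma compound_mul [Finite l] [Fintype m] [Finite n] (M : Matrix l m R) (N : Matrix m n R) :
    compound k (M * N) = compound k M * compound k N := by
  have := Fintype.ofFinite n
  simp only [compound_eq_toMatrix, ← LinearMap.toMatrix_comp, toLin'_mul, exteriorPower.map_comp]

lemma compound_one [Finite n] : compound k (1 : Matrix n n R) = 1 := by
  have := Fintype.ofFinite n
  rw [compound_eq_toMatrix, toLin'_one, exteriorPower.map_id, LinearMap.toMatrix_id]

lemma compound_diagonal [Finite n] (d : n → R) :
    compound k (diagonal d) =
      diagonal fun s : Set.powersetCard n k ↦ ∏ i ∈ (s : Finset n), d i := by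
  have := Fintype.ofFinite n
  have hmap (t : Set.powersetCard n k) : exteriorPower.map k (toLin' (diagonal d))
      ((Pi.basisFun R n).exteriorPower k t) =
      (∏ i, d (Set.powersetCard.ofFinEmbEquiv.symm t i)) • (Pi.basisFun R n).exteriorPower k t := by
    rw [exteriorPower.basis_apply, exteriorPower.map_apply_ιMulti_family,
      exteriorPower.ιMulti_family, exteriorPower.ιMulti_family, ← AlternatingMap.map_smul_univ]
    congr 1
    ext i j
    simp [Pi.single_apply]
  have hprod (t : Set.powersetCard n k) :
      ∏ i, d (Set.powersetCard.ofFinEmbEquiv.symm t i) = ∏ i ∈ (t : Finset n), d i := by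
    conv_rhs => rw [← Finset.map_orderEmbOfFin_univ (t : Finset n) t.2, Finset.prod_map]
    rfl
  ext s t
  rw [compound_eq_toMatrix, LinearMap.toMatrix_apply, hmap, map_smul, Module.Basis.repr_self]
  obtain rfl | hst := eq_or_ne s t
  · simp [hprod]
  · simp [diagonal_apply_ne _ hst, hst.symm]

lemma compound_mem_unitary [Fintype n] [StarRing R] {U : Matrix n n R}
    (hU : U ∈ unitary (Matrix n n R)) :
    compound k U ∈ unitary (Matrix (Set.powersetCard n k) (Set.powersetCard n k) R) := by
  rw [Unitary.mem_iff] at hU ⊢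
  simp only [star_eq_conjTranspose, ← compound_conjTranspose, ← compound_mul] at hU ⊢
  simp only [hU, compound_one, and_self]

end Compound

section CompoundPosSemidef

open scoped MatrixOrder Matrix.Norms.L2Operator

variable {n : Type*} [Fintype n] [LinearOrder n] (k : ℕ)

lemma compound_conjDiagonal (U : unitary (Matrix n n ℂ)) (d : n → ℝ) :
    compound k (conjDiagonal U d) =
      conjDiagonal ⟨compound k (U : Matrix n n ℂ), compound_mem_unitary k U.2⟩
        (fun s ↦ ∏ i ∈ (s : Finset n), d i) := by
  simp only [conjDiagonal_apply, star_eq_conjTranspose, compound_mul, compound_diagonal,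
    compound_conjTranspose, Complex.ofReal_prod]

omit [Fintype n] in
lemma compound_nonneg [Finite n] {A : Matrix n n ℂ} (hA : 0 ≤ A) : 0 ≤ compound k A := by
  have := Fintype.ofFinite n
  obtain ⟨U, d, hd, rfl⟩ := exists_eq_conjDiagonal hA
  rw [compound_conjDiagonal]
  exact conjDiagonal_nonneg _ fun s ↦ Finset.prod_nonneg fun i _ ↦ hd i

lemma compound_rpow {A : Matrix n n ℂ} (hA : 0 ≤ A) (t : ℝ) :
    compound k (A ^ t) = compound k A ^ t := by
  obtain ⟨U, d, hd, rfl⟩ := exists_eq_conjDiagonal hA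
  rw [rpow_conjDiagonal U hd, compound_conjDiagonal, compound_conjDiagonal,
    rpow_conjDiagonal _ fun s ↦ Finset.prod_nonneg fun i _ ↦ hd i]
  simp only [Real.finsetProd_rpow _ _ fun i _ ↦ hd i]

end CompoundPosSemidef

section SortedEigenvalues

open scoped MatrixOrder Matrix.Norms.L2Operator

variable {n : Type*} [Fintype n] [DecidableEq n] {A : Matrix n n ℂ}

/-- The eigenvalues of a Hermitian matrix in decreasing order, continued by zero to a sequence
on `ℕ` so that partial sums and products need no bound on the number of terms. -/
noncomputable def sortedEigenvalues (hA : A.IsHermitian) (i : ℕ) : ℝ :=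
  if h : i < Fintype.card n then hA.eigenvalues₀ ⟨i, h⟩ else 0

lemma sortedEigenvalues_of_card_le (hA : A.IsHermitian) {i : ℕ} (hi : Fintype.card n ≤ i) :
    sortedEigenvalues hA i = 0 := dif_neg hi.not_gt

lemma exists_eigenvalues_eq_sortedEigenvalues (hA : A.IsHermitian) :
    ∃ e : n ↪ ℕ, Finset.univ.map e = Finset.range (Fintype.card n) ∧
      ∀ i, hA.eigenvalues i = sortedEigenvalues hA (e i) := by
  let e := (Fintype.equivOfCardEq (Fintype.card_fin (Fintype.card n))).symm
  refine ⟨e.toEmbedding.trans Fin.valEmbedding, ?_, fun i ↦ ?_⟩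
  · rw [← Finset.map_map, Finset.map_univ_equiv, Fin.map_valEmbedding_univ, Nat.Iio_eq_range]
  · exact (dif_pos (e i).2 : sortedEigenvalues hA (e i) = _).symm

lemma sortedEigenvalues_nonneg (hA : A.PosSemidef) : 0 ≤ sortedEigenvalues hA.isHermitian := by
  obtain ⟨e, he, h⟩ := exists_eigenvalues_eq_sortedEigenvalues hA.isHermitian
  intro i
  obtain hi | hi := lt_or_ge i (Fintype.card n)
  · obtain ⟨j, -, rfl⟩ := Finset.mem_map.1 (he ▸ Finset.mem_range.2 hi)
    exact (hA.eigenvalues_nonneg j).trans_eq (h j)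
  · exact (sortedEigenvalues_of_card_le _ hi).ge

lemma antitone_sortedEigenvalues (hA : A.PosSemidef) :
    Antitone (sortedEigenvalues hA.isHermitian) := by
  intro i j hij
  obtain hj | hj := lt_or_ge j (Fintype.card n)
  · rw [sortedEigenvalues, sortedEigenvalues, dif_pos hj, dif_pos (hij.trans_lt hj)]
    exact hA.isHermitian.eigenvalues₀_antitone hij
  · exact (sortedEigenvalues_of_card_le _ hj).trans_le (sortedEigenvalues_nonneg hA i)

lemma trace_rpow_eq_sum_sortedEigenvalues (hA : A.PosSemidef) (t : ℝ) :
    (A ^ t).trace.re =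
      ∑ i ∈ Finset.range (Fintype.card n), sortedEigenvalues hA.isHermitian i ^ t := by
  obtain ⟨e, he, h⟩ := exists_eigenvalues_eq_sortedEigenvalues hA.isHermitian
  conv_lhs => rw [eq_conjDiagonal_eigenvalues hA.isHermitian,
    rpow_conjDiagonal _ hA.eigenvalues_nonneg, trace_conjDiagonal]
  rw [← he, Finset.sum_map, Complex.re_sum]
  simp only [h, Complex.ofReal_re]

lemma prod_le_prod_range_card {R : Type*} [CommSemiring R] [PartialOrder R] [IsOrderedRing R]
    {d : ℕ → R} (hd : Antitone d) (hd₀ : 0 ≤ d) (s : Finset ℕ) :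
    ∏ i ∈ s, d i ≤ ∏ i ∈ Finset.range s.card, d i := by
  induction s using Finset.induction_on_max with
  | empty => rfl
  | insert a s ha ih =>
    have has : a ∉ s := fun h ↦ (ha a h).false
    have hcard : s.card ≤ a := by
      simpa using Finset.card_le_card fun i hi ↦ Finset.mem_range.2 (ha i hi)
    rw [Finset.prod_insert has, Finset.card_insert_of_notMem has, Finset.prod_range_succ, mul_comm]
    exact mul_le_mul ih (hd hcard) (hd₀ a) (Finset.prod_nonneg fun i _ ↦ hd₀ i)

lemma norm_compound {n : Type*} [Fintype n] [LinearOrder n] (k : ℕ) {A : Matrix n n ℂ}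
    (hA : A.PosSemidef) :
    ‖compound k A‖ = ∏ i ∈ Finset.range k, sortedEigenvalues hA.isHermitian i := by
  obtain ⟨e, he, h⟩ := exists_eigenvalues_eq_sortedEigenvalues hA.isHermitian
  set lam := sortedEigenvalues hA.isHermitian
  have hlam : 0 ≤ lam := sortedEigenvalues_nonneg hA
  have hprod (s : Finset n) : ∏ i ∈ s, hA.isHermitian.eigenvalues i = ∏ i ∈ s.map e, lam i := by
    simp only [Finset.prod_map, h]
  have hprod₀ (s : Finset ℕ) : 0 ≤ ∏ i ∈ s, lam i := Finset.prod_nonneg fun i _ ↦ hlam i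
  conv_lhs => rw [eq_conjDiagonal_eigenvalues hA.isHermitian, compound_conjDiagonal,
    norm_conjDiagonal]
  refine le_antisymm ((pi_norm_le_iff_of_nonneg (hprod₀ _)).2 fun s ↦ ?_) ?_
  · rw [hprod, Real.norm_of_nonneg (hprod₀ _)]
    refine (prod_le_prod_range_card (antitone_sortedEigenvalues hA) hlam _).trans_eq ?_
    rw [Finset.card_map, s.2]
  · obtain hk | hk := le_or_gt k (Fintype.card n)
    · obtain ⟨s, -, hs⟩ := Finset.subset_map_iff.1 (he ▸ Finset.range_mono hk)
      have hcard : s.card = k := by rw [← Finset.card_map e, ← hs, Finset.card_range]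
      rw [hs, ← hprod]
      exact (le_abs_self _).trans (norm_le_pi_norm
        (fun s : Set.powersetCard n k ↦ ∏ i ∈ (s : Finset n), hA.isHermitian.eigenvalues i)
        ⟨s, hcard⟩)
    · rw [Finset.prod_eq_zero (Finset.mem_range.2 hk) (sortedEigenvalues_of_card_le _ le_rfl)]
      exact norm_nonneg _

end SortedEigenvalues

section WeakMajorization

lemma card_le_sum_of_one_le_prod {ι : Type*} {s : Finset ι} {c : ι → ℝ} (hc : ∀ i ∈ s, 0 ≤ c i)
    (h : 1 ≤ ∏ i ∈ s, c i) : (s.card : ℝ) ≤ ∑ i ∈ s, c i := by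
  have hexp : 1 ≤ Real.exp (∑ i ∈ s, (c i - 1)) :=
    calc 1 ≤ ∏ i ∈ s, c i := h
      _ ≤ ∏ i ∈ s, Real.exp (c i - 1) :=
          Finset.prod_le_prod hc fun i _ ↦ by simpa using Real.add_one_le_exp (c i - 1)
      _ = Real.exp (∑ i ∈ s, (c i - 1)) := (Real.exp_sum s _).symm
  simpa [Finset.sum_sub_distrib] using Real.one_le_exp_iff.1 hexp

lemma sum_range_mul_nonneg_of_antitone {R : Type*} [CommRing R] [PartialOrder R] [IsOrderedRing R]
    {a g : ℕ → R} (ha : Antitone a) (ha₀ : 0 ≤ a) {n : ℕ}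
    (hg : ∀ k ≤ n, 0 ≤ ∑ i ∈ Finset.range k, g i) : 0 ≤ ∑ i ∈ Finset.range n, a i * g i := by
  have habel := Finset.sum_range_by_parts a g n
  simp only [smul_eq_mul] at habel
  rw [habel, sub_nonneg]
  calc ∑ i ∈ Finset.range (n - 1), (a (i + 1) - a i) * ∑ j ∈ Finset.range (i + 1), g j
      ≤ 0 := Finset.sum_nonpos fun i hi ↦ mul_nonpos_of_nonpos_of_nonneg
        (sub_nonpos.2 (ha i.le_succ)) (hg _ (by grind))
    _ ≤ a (n - 1) * ∑ i ∈ Finset.range n, g i := mul_nonneg (ha₀ _) (hg n le_rfl)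

lemma sum_range_le_sum_range_of_prod_range_le {a b : ℕ → ℝ} (ha : Antitone a) (ha₀ : 0 ≤ a)
    (hb₀ : 0 ≤ b) (h : ∀ k, ∏ i ∈ Finset.range k, a i ≤ ∏ i ∈ Finset.range k, b i) (n : ℕ) :
    ∑ i ∈ Finset.range n, a i ≤ ∑ i ∈ Finset.range n, b i := by
  induction n with
  | zero => rfl
  | succ n ih =>
    obtain han | han := (ha₀ n).eq_or_lt
    · rw [Finset.sum_range_succ, Finset.sum_range_succ, ← han]
      exact add_le_add ih (hb₀ n)
    have hapos {k : ℕ} (hk : k ≤ n + 1) : ∀ i ∈ Finset.range k, 0 < a i := fun i hi ↦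
      han.trans_le (ha (by grind))
    -- AM-GM bounds the partial sums of `b i / a i - 1`; Abel summation reinstates the weights.
    have hratio (k : ℕ) (hk : k ≤ n + 1) : 0 ≤ ∑ i ∈ Finset.range k, (b i / a i - 1) := by
      have hprod : 1 ≤ ∏ i ∈ Finset.range k, b i / a i := by
        rw [Finset.prod_div_distrib, one_le_div (Finset.prod_pos (hapos hk))]
        exact h k
      simpa [Finset.sum_sub_distrib] using
        card_le_sum_of_one_le_prod (fun i _ ↦ div_nonneg (hb₀ i) (ha₀ i)) hprod
    have habel := sum_range_mul_nonneg_of_antitone ha ha₀ hratio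
    rw [← sub_nonneg, ← Finset.sum_sub_distrib]
    refine habel.trans_eq (Finset.sum_congr rfl fun i hi ↦ ?_)
    rw [mul_sub, mul_one, mul_div_cancel₀ _ (hapos le_rfl i hi).ne']

end WeakMajorization

section ArakiLiebThirring

open scoped MatrixOrder Matrix.Norms.L2Operator

variable {n : Type*} [Fintype n] [DecidableEq n] {A B : Matrix n n ℂ}

omit [DecidableEq n] in
lemma posSemidef_conjugate (hA : 0 ≤ A) (hB : 0 ≤ B) : (B * A * B).PosSemidef :=
  nonneg_iff_posSemidef.1 (conjugate_nonneg_of_nonneg hA hB)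

lemma posSemidef_rpow_conjugate (A B : Matrix n n ℂ) (s : ℝ) :
    (B ^ s * A ^ s * B ^ s).PosSemidef :=
  posSemidef_conjugate CFC.rpow_nonneg CFC.rpow_nonneg

lemma prod_sortedEigenvalues_rpow_conjugate_le (hA : 0 ≤ A) (hB : 0 ≤ B) {s : ℝ}
    (hs : s ∈ Set.Ioc 0 1) (k : ℕ) :
    ∏ i ∈ Finset.range k, sortedEigenvalues (posSemidef_rpow_conjugate A B s).isHermitian i ≤
      (∏ i ∈ Finset.range k, sortedEigenvalues (posSemidef_conjugate hA hB).isHermitian i) ^ s := by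
  -- Minors need an order on the indices; any linear order will do.
  obtain ⟨_, rfl⟩ : ∃ L : LinearOrder n, L.toDecidableEq = ‹DecidableEq n› :=
    ⟨LinearOrder.lift' (Fintype.equivFin n) (Fintype.equivFin n).injective, Subsingleton.elim _ _⟩
  rw [← norm_compound k (posSemidef_conjugate hA hB),
    ← norm_compound k (posSemidef_rpow_conjugate A B s)]
  simp only [compound_mul, compound_rpow k hA, compound_rpow k hB]
  exact norm_rpow_mul_rpow_mul_rpow_le (compound_nonneg k hA) (compound_nonneg k hB) hs

theorem trace_rpow_conjugate_rpow_le (hA : 0 ≤ A) (hB : 0 ≤ B) {s q : ℝ} (hs : s ∈ Set.Ioc 0 1)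
    (hq : 0 ≤ q) :
    ((B ^ s * A ^ s * B ^ s) ^ q).trace.re ≤ ((B * A * B) ^ (s * q)).trace.re := by
  have hL := posSemidef_rpow_conjugate A B s
  have hR := posSemidef_conjugate hA hB
  have hL₀ := sortedEigenvalues_nonneg hL
  have hR₀ := sortedEigenvalues_nonneg hR
  rw [trace_rpow_eq_sum_sortedEigenvalues hL, trace_rpow_eq_sum_sortedEigenvalues hR]
  refine sum_range_le_sum_range_of_prod_range_le
    (a := fun i ↦ sortedEigenvalues hL.isHermitian i ^ q)
    (b := fun i ↦ sortedEigenvalues hR.isHermitian i ^ (s * q))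
    (fun i j hij ↦ Real.rpow_le_rpow (hL₀ j) (antitone_sortedEigenvalues hL hij) hq)
    (fun i ↦ Real.rpow_nonneg (hL₀ i) q) (fun i ↦ Real.rpow_nonneg (hR₀ i) _) (fun k ↦ ?_) _
  rw [Real.finsetProd_rpow _ _ fun i _ ↦ hL₀ i, Real.finsetProd_rpow _ _ fun i _ ↦ hR₀ i,
    Real.rpow_mul (Finset.prod_nonneg fun i _ ↦ hR₀ i)]
  exact Real.rpow_le_rpow (Finset.prod_nonneg fun i _ ↦ hL₀ i)
    (prod_sortedEigenvalues_rpow_conjugate_le hA hB hs k) hq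

lemma Qaz_eq_trace_rpow {ρ σ : Matrix n n ℂ} (hρ : 0 ≤ ρ) (hσ : 0 ≤ σ) (α z : ℝ) :
    Qaz α z ρ σ =
      ((σ ^ ((1 - α) / (2 * z)) * ρ ^ (α / z) * σ ^ ((1 - α) / (2 * z))) ^ z).trace.re := by
  rw [Qaz, mpow_eq_rpow hρ, mpow_eq_rpow hσ, mpow_eq_rpow]
  exact conjugate_nonneg_of_nonneg CFC.rpow_nonneg CFC.rpow_nonneg

theorem Qaz_antitone_in_z_general (α : ℝ) {z z' : ℝ} (hz : 0 < z) (hzz' : z ≤ z')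
    {ρ σ : Matrix n n ℂ} (hρ : ρ.PosSemidef) (hσ : σ.PosSemidef) :
    Qaz α z' ρ σ ≤ Qaz α z ρ σ := by
  have hz' : 0 < z' := hz.trans_le hzz'
  have hs : z / z' ∈ Set.Ioc 0 1 := ⟨div_pos hz hz', (div_le_one hz').2 hzz'⟩
  have halt := trace_rpow_conjugate_rpow_le (A := ρ ^ (α / z)) (B := σ ^ ((1 - α) / (2 * z)))
    CFC.rpow_nonneg CFC.rpow_nonneg hs hz'.le
  rw [rpow_rpow_of_nonneg hρ.nonneg, rpow_rpow_of_nonneg hσ.nonneg] at halt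
  rw [Qaz_eq_trace_rpow hρ.nonneg hσ.nonneg, Qaz_eq_trace_rpow hρ.nonneg hσ.nonneg]
  convert halt using 6 <;> field_simp

end ArakiLiebThirring

/-- Monotonicity of `Q_{α,z}` in `z` for `0 < α < 1`:
if `0 < z ≤ z'` then `Q_{α,z}(ρ‖σ) ≥ Q_{α,z'}(ρ‖σ)`. -/
theorem Qaz_antitone_in_z (n : ℕ) (α z z' : ℝ) (hα0 : 0 < α) (hα1 : α < 1)
    (hz : 0 < z) (hzz' : z ≤ z')
    (ρ σ : Matrix (Fin n) (Fin n) ℂ) (hρ : ρ.PosSemidef) (hσ : σ.PosSemidef) :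
    Qaz α z' ρ σ ≤ Qaz α z ρ σ :=
  Qaz_antitone_in_z_general α hz hzz' hρ hσ
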